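/- In the braid group B_n, the elements U_2, U_3, …, U_n pairwise commute: U_i·U_j = U_j·U_i for all 2 ≤ i, j ≤ n. -/

import Mathlib

/-- The braid relations on `m` generators (so that `σ_1, …, σ_m` present the braid
group `B_{m+1}`); generator `i : Fin m` corresponds to `σ_{i+1}`. -/
def braidRels (m : ℕ) : Set (FreeGroup (Fin m)) :=
  {r | ∃ i j : Fin m, (i.val + 2 ≤ j.val ∨ j.val + 2 ≤ i.val) ∧
        r = FreeGroup.of i * FreeGroup.of j * (FreeGroup.of i)⁻¹ * (FreeGroup.of j)⁻¹}
  ∪ {r | ∃ i j : Fin m, (i.val + 1 = j.val ∨ j.val + 1 = i.val) ∧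
        r = FreeGroup.of i * FreeGroup.of j * FreeGroup.of i *
            (FreeGroup.of j * FreeGroup.of i * FreeGroup.of j)⁻¹}

/-- The braid group `B n` on `n` strands, presented with generators `σ_1, …, σ_{n-1}`. -/
abbrev BraidGroup (n : ℕ) : Type := PresentedGroup (braidRels (n - 1))

namespace BraidGroup

/-- The Artin generator `σ_i` of `B n` for `1 ≤ i ≤ n - 1` (junk value `1` otherwise). -/
def σ (n i : ℕ) : BraidGroup n :=
  if h : 1 ≤ i ∧ i ≤ n - 1 then PresentedGroup.of (⟨i - 1, by omega⟩ : Fin (n - 1)) else 1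

/-- `D n k = σ_{k-1} ⋯ σ_2 σ_1` in `B n`; `D n 1 = 1`. -/
def D (n k : ℕ) : BraidGroup n :=
  (((List.range (k - 1)).reverse).map (fun j => σ n (j + 1))).prod

/-- `E n k = σ_1 σ_2 ⋯ σ_{k-1}` in `B n`; `E n 1 = 1`. -/
def E (n k : ℕ) : BraidGroup n :=
  ((List.range (k - 1)).map (fun j => σ n (j + 1))).prod

/-- `U n k = D n k * E n k` in `B n`; `U n 1 = 1`. -/
def U (n k : ℕ) : BraidGroup n := D n k * E n k

/-- `δ = σ_{n-1} σ_{n-2} ⋯ σ_1` in `B n`. -/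
def delta (n : ℕ) : BraidGroup n := D n n

/-- `Δ = σ_1 (σ_2 σ_1) ⋯ (σ_{n-1} ⋯ σ_1) = D_2 D_3 ⋯ D_n` in `B n`. -/
def Delta (n : ℕ) : BraidGroup n :=
  ((List.range (n - 1)).map (fun j => D n (j + 2))).prod

end BraidGroup

namespace BraidGroup

theorem σ_commute (n : ℕ) {i j : ℕ} (h : i + 2 ≤ j) : Commute (σ n i) (σ n j) := by
  unfold σ
  split_ifs with hi hj
  · have hr := PresentedGroup.one_of_mem (rels := braidRels (n - 1))
      (Or.inl ⟨⟨i - 1, by omega⟩, ⟨j - 1, by omega⟩, Or.inl (by simp only; omega), rfl⟩)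
    simp only [map_mul, map_inv] at hr
    rw [mul_inv_eq_one, mul_inv_eq_iff_eq_mul] at hr
    exact hr
  all_goals simp

theorem σ_braid {n i : ℕ} (hi : 1 ≤ i) (hn : i + 1 ≤ n - 1) :
    σ n i * σ n (i + 1) * σ n i = σ n (i + 1) * σ n i * σ n (i + 1) := by
  have hr := PresentedGroup.one_of_mem (rels := braidRels (n - 1))
    (Or.inr ⟨⟨i - 1, by omega⟩, ⟨i + 1 - 1, by omega⟩, Or.inl (by simp only; omega), rfl⟩)
  rw [map_mul, map_inv, mul_inv_eq_one] at hr
  simp only [map_mul] at hr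
  rw [σ, σ, dif_pos ⟨hi, by omega⟩, dif_pos ⟨by omega, hn⟩]
  exact hr

theorem U_one (n : ℕ) : U n 1 = 1 := by
  simp [U, D, E]

theorem U_succ_succ (n k : ℕ) : U n (k + 2) = σ n (k + 1) * U n (k + 1) * σ n (k + 1) := by
  simp [U, D, E, List.range_succ, mul_assoc]

/-- `U_{k+1}` is a word in `σ_1, …, σ_k`. -/
theorem commute_U_of_forall_commute_σ {n k : ℕ} {x : BraidGroup n}
    (h : ∀ i, 1 ≤ i → i ≤ k → Commute x (σ n i)) : Commute x (U n (k + 1)) := by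
  induction k with
  | zero => simp [U_one]
  | succ k ih =>
    have hk := h (k + 1) (by omega) le_rfl
    rw [U_succ_succ]
    exact (hk.mul_right (ih fun i h1 h2 => h i h1 (by omega))).mul_right hk

theorem σ_commute_U_of_lt {n j k : ℕ} (h : k + 2 ≤ j) : Commute (σ n j) (U n (k + 1)) :=
  commute_U_of_forall_commute_σ fun _ _ hi => (σ_commute n (by omega)).symm

theorem σ_commute_U {n i k : ℕ} (hi : 1 ≤ i) (hik : i + 2 ≤ k) (hk : k ≤ n) :
    Commute (σ n i) (U n k) := by
  induction k, hik using Nat.le_induction with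
  | base =>
    obtain ⟨m, rfl⟩ : ∃ m, i = m + 1 := ⟨i - 1, by omega⟩
    have hb : σ n (m + 1) * σ n (m + 2) * σ n (m + 1) = _ := σ_braid hi (by omega)
    have hc : σ n (m + 2) * U n (m + 1) = _ := σ_commute_U_of_lt (n := n) (k := m) le_rfl
    rw [U_succ_succ n (m + 1), U_succ_succ n m]
    generalize U n (m + 1) = u at *
    generalize σ n (m + 1) = a at *
    change a * (σ n (m + 2) * (a * u * a) * σ n (m + 2)) =
      σ n (m + 2) * (a * u * a) * σ n (m + 2) * a
    change _ = σ n (m + 2) * a * σ n (m + 2) at hb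
    generalize σ n (m + 2) = b at *
    calc a * (b * (a * u * a) * b) = (a * b * a) * u * a * b := by group
      _ = b * a * (b * u) * a * b := by rw [hb]; group
      _ = b * a * u * (b * a * b) := by rw [hc]; group
      _ = b * (a * u * a) * b * a := by rw [← hb]; group
  | succ k hk' ih =>
    obtain ⟨m, rfl⟩ : ∃ m, k = m + 1 := ⟨k - 1, by omega⟩
    have hc : Commute (σ n i) (σ n (m + 1)) := σ_commute n (by omega)
    rw [U_succ_succ]
    exact (hc.mul_right (ih (by omega))).mul_right hc

theorem U_commute_of_lt {n i j : ℕ} (hi : 1 ≤ i) (hij : i < j) (hj : j ≤ n) :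
    Commute (U n i) (U n j) := by
  obtain ⟨m, rfl⟩ : ∃ m, i = m + 1 := ⟨i - 1, by omega⟩
  exact (commute_U_of_forall_commute_σ fun l h1 h2 => (σ_commute_U h1 (by omega) hj).symm).symm

end BraidGroup

/-- In `B n`, the elements `U_2, …, U_n` pairwise commute. -/
theorem U_comm (n i j : ℕ) (hi2 : 2 ≤ i) (hin : i ≤ n) (hj2 : 2 ≤ j) (hjn : j ≤ n) :
    BraidGroup.U n i * BraidGroup.U n j = BraidGroup.U n j * BraidGroup.U n i := by
  rcases lt_trichotomy i j with h | rfl | h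
  · exact BraidGroup.U_commute_of_lt (by omega) h hjn
  · rfl
  · exact (BraidGroup.U_commute_of_lt (by omega) h hin).symm
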